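/- The density η_log attains its unique global maximum at s = (1/2)·log 2: for every real s ≠ (1/2)·log 2 one has η_log(s) < η_log((1/2)·log 2), and η_log((1/2)·log 2) = (12/π²)·log 2. -/

import Mathlib

/-- The limiting density of the logarithm of smallest denominators. -/
noncomputable def etaLog (s : ℝ) : ℝ :=
  if s ≤ 0 then 6 / Real.pi ^ 2 * Real.exp (2 * s)
  else if s ≤ Real.log 2 then 6 / Real.pi ^ 2 * (-Real.exp (2 * s) + 2 + 4 * s)
  else 6 / Real.pi ^ 2 * (-Real.exp (2 * s) + 2
    + 2 * Real.exp (2 * s) * Real.sqrt (1 / 4 - Real.exp (-2 * s))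
    - 4 * Real.log (1 / 2 + Real.sqrt (1 / 4 - Real.exp (-2 * s))))

/-!
Up to the factor `6 / π²`, the middle branch is `2 + (2 * log x - x)` at `x = exp (2 * s)`, and the
last one is `2 + 2 * (2 * log t - t)` at `t = w⁻¹`, where `w > 1 / 2` solves
`w * (1 - w) = exp (-2 * s)`. The function `x ↦ 2 * log x - x` has its strict maximum at `x = 2`,
which the middle branch attains at `s = log 2 / 2`, with value `2 * log 2`; the bound obtained on
the last branch is `4 * log 2 - 2`, which is smaller because `log 2 < 1`. On the first branch the
density is at most `6 / π²`, and `1 < 2 * log 2`.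
-/

section

open Real Set

theorem mul_log_sub_lt {a x : ℝ} (ha : 0 < a) (hx : 0 < x) (hxa : x ≠ a) :
    a * log x - x < a * log a - a := by
  have hlog : log (x / a) < x / a - 1 :=
    log_lt_sub_one_of_pos (div_pos hx ha) (by rwa [ne_eq, div_eq_one_iff_eq ha.ne'])
  have hscaled : a * (log x - log a) < a * (x / a - 1) := by
    rw [← log_div hx.ne' ha.ne']
    exact mul_lt_mul_of_pos_left hlog ha
  have hcancel : a * (x / a - 1) = x - a := by field_simp
  linarith

/-- The larger root of `w * (1 - w) = c`, for `c ≤ 1 / 4`; it turns the last branch of `etaLog`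
into a rational function and a logarithm. For `c > 1 / 4` it takes the junk value `1 / 2`. -/
noncomputable def largerRoot (c : ℝ) : ℝ :=
  1 / 2 + √(1 / 4 - c)

theorem largerRoot_mul_one_sub {c : ℝ} (hc : c ≤ 1 / 4) :
    largerRoot c * (1 - largerRoot c) = c := by
  have hsq : √(1 / 4 - c) ^ 2 = 1 / 4 - c := sq_sqrt (sub_nonneg.mpr hc)
  rw [largerRoot]
  linear_combination -hsq

theorem half_lt_largerRoot {c : ℝ} (hc : c < 1 / 4) : 1 / 2 < largerRoot c :=
  lt_add_of_pos_right _ (sqrt_pos.mpr (sub_pos.mpr hc))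

theorem exp_neg_two_mul_lt_one_fourth {s : ℝ} (hs : log 2 < s) : exp (-2 * s) < 1 / 4 := by
  calc exp (-2 * s) < exp (-(log 2 + log 2)) := exp_lt_exp.mpr (by linarith)
    _ = 1 / 4 := by
      rw [exp_neg, exp_add, exp_log two_pos]
      norm_num

theorem etaLog_of_nonpos {s : ℝ} (hs : s ≤ 0) : etaLog s = 6 / π ^ 2 * exp (2 * s) :=
  if_pos hs

theorem etaLog_of_mem_Ioc {s : ℝ} (hs : s ∈ Ioc 0 (log 2)) :
    etaLog s = 6 / π ^ 2 * (-exp (2 * s) + 2 + 4 * s) := by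
  rw [etaLog, if_neg hs.1.not_ge, if_pos hs.2]

theorem etaLog_of_log_two_lt {s : ℝ} (hs : log 2 < s) :
    etaLog s = 6 / π ^ 2 *
      (2 + 2 * (2 * log (largerRoot (exp (-2 * s)))⁻¹ - (largerRoot (exp (-2 * s)))⁻¹)) := by
  have hpos : 0 < s := (log_pos one_lt_two).trans hs
  have hroot := largerRoot_mul_one_sub (exp_neg_two_mul_lt_one_fourth hs).le
  have hsqrt : √(1 / 4 - exp (-2 * s)) = largerRoot (exp (-2 * s)) - 1 / 2 := by
    rw [largerRoot, add_sub_cancel_left]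
  have hexp : exp (2 * s) * exp (-2 * s) = 1 := by rw [← exp_add]; simp
  rw [etaLog, if_neg hpos.not_ge, if_neg hs.not_ge, hsqrt, add_sub_cancel, log_inv]
  set w := largerRoot (exp (-2 * s))
  have hinv : exp (2 * s) * (1 - w) = w⁻¹ :=
    eq_inv_of_mul_eq_one_left (by linear_combination hexp + exp (2 * s) * hroot)
  linear_combination -(12 / π ^ 2) * hinv

theorem etaLog_half_log_two : etaLog (1 / 2 * log 2) = 12 / π ^ 2 * log 2 := by
  have hlog : 0 < log 2 := log_pos one_lt_two
  have hexp : exp (2 * (1 / 2 * log 2)) = 2 := by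
    rw [← mul_assoc, mul_one_div_cancel two_ne_zero, one_mul, exp_log two_pos]
  rw [etaLog_of_mem_Ioc ⟨by linarith, by linarith⟩, hexp]
  ring

theorem etaLog_lt_of_nonpos {s : ℝ} (hs : s ≤ 0) : etaLog s < 12 / π ^ 2 * log 2 := by
  have hexp : exp (2 * s) ≤ 1 := exp_le_one_iff.mpr (by linarith)
  calc etaLog s = 6 / π ^ 2 * exp (2 * s) := etaLog_of_nonpos hs
    _ < 6 / π ^ 2 * (2 * log 2) := by
      gcongr
      linarith [log_two_gt_d9]
    _ = 12 / π ^ 2 * log 2 := by ring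

theorem etaLog_lt_of_mem_Ioc {s : ℝ} (hs : s ∈ Ioc 0 (log 2)) (hmode : s ≠ 1 / 2 * log 2) :
    etaLog s < 12 / π ^ 2 * log 2 := by
  have hx : exp (2 * s) ≠ 2 := fun h ↦ by
    have hlog : log 2 = 2 * s := by rw [← log_exp (2 * s), h]
    exact hmode (by linarith)
  have hmax := mul_log_sub_lt two_pos (exp_pos (2 * s)) hx
  rw [log_exp] at hmax
  calc etaLog s = 6 / π ^ 2 * (-exp (2 * s) + 2 + 4 * s) := etaLog_of_mem_Ioc hs
    _ < 6 / π ^ 2 * (2 * log 2) := by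
      gcongr
      linarith
    _ = 12 / π ^ 2 * log 2 := by ring

theorem etaLog_lt_of_log_two_lt {s : ℝ} (hs : log 2 < s) : etaLog s < 12 / π ^ 2 * log 2 := by
  rw [etaLog_of_log_two_lt hs]
  have hw := half_lt_largerRoot (exp_neg_two_mul_lt_one_fourth hs)
  set w := largerRoot (exp (-2 * s))
  have hw0 : 0 < w := one_half_pos.trans hw
  have hinv : w⁻¹ < 2 := inv_lt_of_inv_lt₀ two_pos (by rwa [← one_div])
  have hmax := mul_log_sub_lt two_pos (inv_pos.mpr hw0) hinv.ne
  calc 6 / π ^ 2 * (2 + 2 * (2 * log w⁻¹ - w⁻¹)) < 6 / π ^ 2 * (2 * log 2) := by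
        gcongr
        linarith [log_two_lt_d9]
    _ = 12 / π ^ 2 * log 2 := by ring

end

theorem etaLog_mode :
    (∀ s : ℝ, s ≠ (1 / 2) * Real.log 2 → etaLog s < etaLog ((1 / 2) * Real.log 2)) ∧
      etaLog ((1 / 2) * Real.log 2) = 12 / Real.pi ^ 2 * Real.log 2 := by
  refine ⟨fun s hmode ↦ ?_, etaLog_half_log_two⟩
  rw [etaLog_half_log_two]
  rcases le_or_gt s 0 with hs | hpos
  · exact etaLog_lt_of_nonpos hs
  rcases le_or_gt s (Real.log 2) with hs | hs
  · exact etaLog_lt_of_mem_Ioc ⟨hpos, hs⟩ hmode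
  · exact etaLog_lt_of_log_two_lt hs
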